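/- arXiv:1804.07058 — 3 statements merged into one kernel-verified Lean document; each statement's English description precedes it below -/
import Mathlib

section
/- Let A = {1, x, ..., x^d} on ℝ. Then every moment sequence s ∈ ℝ^{d+1} arising from a finite measure on ℝ with finite moments up to degree d has a representing measure that is a sum of at most ⌈(d+1)/2⌉ Dirac measures with positive weights. -/
open MeasureTheory

/-- Existence of a symmetric extension of the shift. -/
lemma richter_exists_symm {V : Type*} [NormedAddCommGroup V] [InnerProductSpace ℝ V]
    [FiniteDimensional ℝ V] (v : ℕ → V) (n : ℕ) (m : ℝ)
    (h1 : ∀ a : Fin n → ℝ, ∑ i, a i • v i = 0 → ∑ i, a i • v (i + 1) = 0)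
    (h2 : ∀ i < n, ∀ j < n, inner ℝ (v (i + 1)) (v j) = inner ℝ (v i) (v (j + 1)))
    (h3 : ∀ a : Fin n → ℝ, v n = ∑ i, a i • v i →
      inner ℝ (∑ i, a i • v (i + 1)) (v n) = m) :
    ∃ T : V →ₗ[ℝ] V, T.IsSymmetric ∧ (∀ i < n, T (v i) = v (i + 1)) ∧
      inner ℝ (T (v n)) (v n) = m := by
  classical
  let φ : (Fin n → ℝ) →ₗ[ℝ] V := Fintype.linearCombination ℝ (fun i : Fin n => v i)
  let ψ : (Fin n → ℝ) →ₗ[ℝ] V := Fintype.linearCombination ℝ (fun i : Fin n => v (i + 1))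
  have hφ : ∀ a, φ a = ∑ i, a i • v i := fun a => Fintype.linearCombination_apply ℝ _ a
  have hψ : ∀ a, ψ a = ∑ i, a i • v (i + 1) := fun a => Fintype.linearCombination_apply ℝ _ a
  let W : Submodule ℝ V := LinearMap.range φ
  obtain ⟨r, hr⟩ := φ.rangeRestrict.exists_rightInverse_of_surjective φ.range_rangeRestrict
  have hr' : ∀ w : W, φ (r w) = w := fun w => by
    have := LinearMap.congr_fun hr w
    exact congrArg Subtype.val this
  let T0 : W →ₗ[ℝ] V := ψ ∘ₗ r
  have hker : ∀ a, φ a = 0 → ψ a = 0 := fun a ha => by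
    rw [hψ]; apply h1; rw [← hφ]; exact ha
  have hT0 : ∀ a (h : φ a ∈ W), T0 ⟨φ a, h⟩ = ψ a := fun a h => by
    have : ψ (r ⟨φ a, h⟩ - a) = 0 := hker _ (by rw [map_sub, hr', sub_self])
    rw [map_sub, sub_eq_zero] at this
    exact this
  have hsym0 : ∀ a b, inner ℝ (ψ a) (φ b) = inner ℝ (φ a) (ψ b) := fun a b => by
    simp only [hφ, hψ, sum_inner, inner_sum, real_inner_smul_left, real_inner_smul_right]
    refine Finset.sum_congr rfl fun i _ => Finset.sum_congr rfl fun j _ => ?_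
    rw [h2 j j.2 i i.2] <;> simp
  let P : V →ₗ[ℝ] V := W.starProjection.toLinearMap
  let S : V →ₗ[ℝ] V := T0 ∘ₗ W.orthogonalProjectionOnto.toLinearMap
  have hPmem : ∀ x, P x ∈ W := fun x => W.starProjection_apply_mem x
  have hPW : ∀ x ∈ W, P x = x := fun x hx => W.starProjection_eq_self_iff.2 hx
  have hPsym : ∀ x y, inner ℝ (P x) y = inner ℝ x (P y) := fun x y =>
    W.inner_starProjection_left_eq_right x y
  have hSφ : ∀ x a, P x = φ a → S x = ψ a := fun x a h => by
    have h' : W.orthogonalProjectionOnto x = ⟨φ a, ⟨a, rfl⟩⟩ := Subtype.ext h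
    change T0 (W.orthogonalProjectionOnto x) = _
    rw [h']; exact hT0 a _
  have hSsym : ∀ x y, inner ℝ (S x) (P y) = inner ℝ (P x) (S y) := fun x y => by
    obtain ⟨a, ha⟩ := hPmem x
    obtain ⟨b, hb⟩ := hPmem y
    rw [hSφ x a ha.symm, hSφ y b hb.symm, ← ha, ← hb, hsym0]
  let A := LinearMap.adjoint S
  have hA1 : ∀ x y, inner ℝ (A x) y = inner ℝ x (S y) := fun x y =>
    LinearMap.adjoint_inner_left S y x
  have hA2 : ∀ x y, inner ℝ x (A y) = inner ℝ (S x) y := fun x y =>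
    LinearMap.adjoint_inner_right S x y
  have main : ∀ c : ℝ, ∃ T : V →ₗ[ℝ] V, T.IsSymmetric ∧ (∀ a, T (φ a) = ψ a) ∧
      ∀ x, T x = S x + A x - P (S x) + c • (x - P x) := fun c => by
    refine ⟨S + A - P ∘ₗ S + c • (LinearMap.id - P), ?_, ?_, fun x => by simp⟩
    · intro x y
      simp only [LinearMap.add_apply, LinearMap.sub_apply, LinearMap.comp_apply,
        LinearMap.smul_apply, LinearMap.id_apply, inner_add_left, inner_sub_left,
        inner_add_right, inner_sub_right, real_inner_smul_left, real_inner_smul_right,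
        hA1, hA2, hPsym, hSsym]
      ring
    · intro a
      have hP : P (φ a) = φ a := hPW _ ⟨a, rfl⟩
      have hAS : A (φ a) = P (S (φ a)) := by
        refine ext_inner_right ℝ fun y => ?_
        rw [hA1, hPsym, hSsym, hP]
      simp [hP, hAS, hSφ _ a hP]
  have hφs : ∀ i (hi : i < n), φ (Pi.single ⟨i, hi⟩ 1) = v i := fun i hi => by
    simp [φ]
  have hψs : ∀ i (hi : i < n), ψ (Pi.single ⟨i, hi⟩ 1) = v (i + 1) := fun i hi => by
    simp [ψ]
  by_cases hW : v n ∈ W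
  · obtain ⟨T, hT, hTφ, -⟩ := main 0
    refine ⟨T, hT, fun i hi => by rw [← hφs i hi, hTφ, hψs], ?_⟩
    obtain ⟨a, ha⟩ := hW
    rw [← h3 a (by rw [← hφ, ha]), ← hψ, ← hTφ, ha]
  · set u := v n - P (v n) with hu
    have hu0 : u ≠ 0 := fun h => hW (by
      rw [sub_eq_zero.1 h]; exact hPmem _)
    have huu : inner ℝ u (v n) = inner ℝ u u := by
      have h0 : inner ℝ u (P (v n)) = 0 := by
        rw [← hPsym, hu, map_sub, hPW _ (hPmem _), sub_self, inner_zero_left]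
      conv_rhs => rw [hu, inner_sub_right, ← hu, h0, sub_zero]
    have hne : inner ℝ u (v n) ≠ 0 := by
      rw [huu]; exact inner_self_ne_zero.2 hu0
    obtain ⟨T, hT, hTφ, hTx⟩ :=
      main ((m - inner ℝ (S (v n) + A (v n) - P (S (v n))) (v n)) / inner ℝ u (v n))
    refine ⟨T, hT, fun i hi => by rw [← hφs i hi, hTφ, hψs], ?_⟩
    rw [hTx, inner_add_left, real_inner_smul_left, ← hu, div_mul_cancel₀ _ hne]
    ring

lemma richter_fd {V : Type*} [NormedAddCommGroup V] [InnerProductSpace ℝ V]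
    [FiniteDimensional ℝ V] (v : ℕ → V) (n : ℕ) (m : ℝ)
    (h1 : ∀ a : Fin n → ℝ, ∑ i, a i • v i = 0 → ∑ i, a i • v (i + 1) = 0)
    (h2 : ∀ i < n, ∀ j < n, inner ℝ (v (i + 1)) (v j) = inner ℝ (v i) (v (j + 1)))
    (h3 : ∀ a : Fin n → ℝ, v n = ∑ i, a i • v i →
      inner ℝ (∑ i, a i • v (i + 1)) (v n) = m) :
    ∃ c x : Fin (Module.finrank ℝ V) → ℝ, (∀ k, 0 ≤ c k) ∧
      (∀ i ≤ n, ∀ j ≤ n, inner ℝ (v i) (v j) = ∑ k, c k * x k ^ (i + j)) ∧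
      m = ∑ k, c k * x k ^ (2 * n + 1) := by
  obtain ⟨T, hT, hTv, hTm⟩ := richter_exists_symm v n m h1 h2 h3
  let b := hT.eigenvectorBasis rfl
  let l := hT.eigenvalues rfl
  have hb : ∀ k x, inner ℝ (b k) (T x) = l k * inner ℝ (b k) x := fun k x => by
    rw [← hT, hT.apply_eigenvectorBasis]
    exact real_inner_smul_left _ _ _
  have hv : ∀ k, ∀ i ≤ n, inner ℝ (b k) (v i) = l k ^ i * inner ℝ (b k) (v 0) := by
    intro k i
    induction i with
    | zero => simp
    | succ i ih =>
      intro hi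
      rw [← hTv i hi, hb, ih (by omega)]; ring
  refine ⟨fun k => inner ℝ (b k) (v 0) ^ 2, l, fun k => sq_nonneg _, ?_, ?_⟩
  · intro i hi j hj
    rw [← b.sum_inner_mul_inner]
    refine Finset.sum_congr rfl fun k _ => ?_
    rw [real_inner_comm, hv k i hi, hv k j hj]; ring
  · rw [← hTm, ← b.sum_inner_mul_inner]
    refine Finset.sum_congr rfl fun k _ => ?_
    rw [real_inner_comm, hb, hv k n le_rfl]; ring

lemma richter_ip {E : Type*} [NormedAddCommGroup E] [InnerProductSpace ℝ E]
    (v : ℕ → E) (n : ℕ) (m : ℝ)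
    (h1 : ∀ a : Fin n → ℝ, ∑ i, a i • v i = 0 → ∑ i, a i • v (i + 1) = 0)
    (h2 : ∀ i < n, ∀ j < n, inner ℝ (v (i + 1)) (v j) = inner ℝ (v i) (v (j + 1)))
    (h3 : ∀ a : Fin n → ℝ, v n = ∑ i, a i • v i →
      inner ℝ (∑ i, a i • v (i + 1)) (v n) = m) :
    ∃ N ≤ n + 1, ∃ c x : Fin N → ℝ, (∀ k, 0 ≤ c k) ∧
      (∀ i ≤ n, ∀ j ≤ n, inner ℝ (v i) (v j) = ∑ k, c k * x k ^ (i + j)) ∧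
      m = ∑ k, c k * x k ^ (2 * n + 1) := by
  let V : Submodule ℝ E := Submodule.span ℝ (Set.range fun i : Fin (n + 1) => v i)
  have : FiniteDimensional ℝ V := FiniteDimensional.span_of_finite ℝ (Set.finite_range _)
  have hm : ∀ i ≤ n, v i ∈ V := fun i hi =>
    Submodule.subset_span ⟨⟨i, by omega⟩, rfl⟩
  let w : ℕ → V := fun i => if h : i ≤ n then ⟨v i, hm i h⟩ else 0
  have hw : ∀ i ≤ n, (w i : E) = v i := fun i hi => by simp [w, hi]
  have e0 : ∀ a : Fin n → ℝ, ((∑ i, a i • w i : V) : E) = ∑ i, a i • v i := fun a => by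
    rw [Submodule.coe_sum]
    exact Finset.sum_congr rfl fun i _ => by rw [Submodule.coe_smul, hw i i.2.le]
  have e1 : ∀ a : Fin n → ℝ, ((∑ i, a i • w (i + 1) : V) : E) = ∑ i, a i • v (i + 1) :=
    fun a => by
      rw [Submodule.coe_sum]
      exact Finset.sum_congr rfl fun i _ => by rw [Submodule.coe_smul, hw (i + 1) i.2]
  obtain ⟨c, x, hc, hx, hmm⟩ := richter_fd w n m
    (fun a ha => by
      apply Subtype.ext
      rw [e1]; apply h1; rw [← e0, ha]; rfl)
    (fun i hi j hj => by
      rw [Submodule.coe_inner, Submodule.coe_inner, hw _ hi, hw _ hj, hw _ hi.le, hw _ hj.le]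
      exact h2 i hi j hj)
    (fun a ha => by
      rw [Submodule.coe_inner, e1, hw _ le_rfl]
      apply h3
      rw [← e0, ← ha, hw _ le_rfl])
  refine ⟨_, ?_, c, x, hc, fun i hi j hj => ?_, hmm⟩
  · have := finrank_range_le_card (R := ℝ) (fun i : Fin (n + 1) => v i)
    simpa [Set.finrank] using this
  · rw [← hx i hi j hj, Submodule.coe_inner, hw i hi, hw j hj]

lemma richter_nonneg (n : ℕ) (μ : Measure ℝ)
    (hint : ∀ i ≤ 2 * n, Integrable (fun x : ℝ => x ^ i) μ) :
    ∃ N ≤ n + 1, ∃ c x : Fin N → ℝ, (∀ k, 0 ≤ c k) ∧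
      ∀ i ≤ 2 * n + 1, (∫ t : ℝ, t ^ i ∂μ) = ∑ k, c k * x k ^ i := by
  have hL : ∀ i ≤ n, MemLp (fun x : ℝ => x ^ i) 2 μ := fun i hi => by
    rw [memLp_two_iff_integrable_sq (by fun_prop)]
    have := hint (i * 2) (by omega)
    simpa [pow_mul] using this
  let v : ℕ → Lp ℝ 2 μ := fun i => if h : i ≤ n then (hL i h).toLp _ else 0
  have hv : ∀ i ≤ n, v i =ᵐ[μ] fun x => x ^ i := fun i hi => by
    simp only [v, hi, dif_pos]
    exact MemLp.coeFn_toLp _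
  have hsum : ∀ (a : Fin n → ℝ) (s : ℕ), s ≤ 1 →
      (∑ i, a i • v (i + s) : Lp ℝ 2 μ) =ᵐ[μ] fun x => ∑ i, a i * x ^ ((i : ℕ) + s) := by
    intro a s hs
    have h1 : ∀ᵐ x ∂μ, ∀ i : Fin n, (a i • v (i + s) : Lp ℝ 2 μ) x = a i * x ^ ((i : ℕ) + s) := by
      rw [ae_all_iff]
      intro i
      filter_upwards [Lp.coeFn_smul (a i) (v (i + s)), hv (i + s) (by omega)] with x hx hx'
      rw [hx, Pi.smul_apply, hx', smul_eq_mul]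
    filter_upwards [Lp.coeFn_fun_finsetSum Finset.univ (fun i : Fin n => a i • v (i + s)), h1]
      with x hx hx'
    rw [hx]
    exact Finset.sum_congr rfl fun i _ => hx' i
  have hinner : ∀ i ≤ n, ∀ j ≤ n, inner ℝ (v i) (v j) = ∫ t, t ^ (i + j) ∂μ := by
    intro i hi j hj
    rw [L2.inner_def]
    apply integral_congr_ae
    filter_upwards [hv i hi, hv j hj] with x hx hx'
    rw [hx, hx']; simp [pow_add, mul_comm]
  obtain ⟨N, hN, c, x, hc, hx, hm⟩ := richter_ip v n (∫ t, t ^ (2 * n + 1) ∂μ)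
    (fun a ha => by
      have h0 := hsum a 0 (by omega)
      simp only [add_zero] at h0
      rw [ha] at h0
      apply Lp.ext
      filter_upwards [h0, hsum a 1 le_rfl, Lp.coeFn_zero ℝ 2 μ] with x hx hx1 hx2
      rw [hx1, hx2, Pi.zero_apply]
      rw [hx2, Pi.zero_apply] at hx
      simp only [pow_succ, ← mul_assoc, ← Finset.sum_mul]
      rw [← hx, zero_mul])
    (fun i hi j hj => by
      rw [hinner _ hi _ hj.le, hinner _ hi.le _ hj]
      congr! 3; omega)
    (fun a ha => by
      have h0 := hsum a 0 (by omega)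
      simp only [add_zero] at h0
      rw [← ha] at h0
      rw [L2.inner_def]
      apply integral_congr_ae
      filter_upwards [h0, hsum a 1 le_rfl, hv n le_rfl] with x hx hx1 hx2
      rw [hx1, hx2]
      rw [hx2] at hx
      simp only [pow_succ, ← mul_assoc, ← Finset.sum_mul]
      rw [← hx]
      simp; ring)
  refine ⟨N, hN, c, x, hc, fun i hi => ?_⟩
  rcases Nat.lt_or_ge (2 * n) i with h | h
  · obtain rfl : i = 2 * n + 1 := by omega
    exact hm
  · have := hx (i / 2) (by omega) (i - i / 2) (by omega)
    rw [hinner _ (by omega) _ (by omega)] at this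
    rwa [show i / 2 + (i - i / 2) = i by omega] at this

/-- Richter's theorem: every truncated moment sequence of {1, x, …, x^d} on ℝ has a
representing measure with at most ⌈(d+1)/2⌉ atoms. -/
theorem richter_univariate (d : ℕ) (μ : Measure ℝ) [IsFiniteMeasure μ]
    (hint : ∀ i ≤ d, Integrable (fun x : ℝ => x ^ i) μ) :
    ∃ k ≤ (d + 2) / 2, ∃ (c : Fin k → ℝ) (x : Fin k → ℝ),
      (∀ j, 0 < c j) ∧
      ∀ i ≤ d, (∫ t : ℝ, t ^ i ∂μ) = ∑ j, c j * x j ^ i := by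
  classical
  obtain ⟨N, hN, c, x, hc, hx⟩ := richter_nonneg (d / 2) μ (fun i hi => hint i (by omega))
  let s : Finset (Fin N) := Finset.univ.filter fun k => 0 < c k
  have hs : s.card ≤ N := by simpa using s.card_le_univ
  refine ⟨s.card, by omega, fun j => c (s.equivFin.symm j), fun j => x (s.equivFin.symm j),
    fun j => ?_, fun i hi => ?_⟩
  · exact (Finset.mem_filter.1 (s.equivFin.symm j).2).2
  · rw [hx i (by omega),
      Equiv.sum_comp s.equivFin.symm (fun k : s => c k * x k ^ i),
      Finset.sum_coe_sort s (fun k => c k * x k ^ i)]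
    symm
    apply Finset.sum_subset (Finset.subset_univ s)
    intro k _ hk
    have : c k = 0 := le_antisymm (not_lt.1 fun h => hk (by simp [s, h])) (hc k)
    simp [this]
end

section
/- Let X, Σ be sets and b₁,...,b_m real-valued functions on X × Σ defined by b_i(x,σ) = ∫_X a_i dδ_{x,σ}, where δ_{x,σ} are probability measures with all |b_i(x,σ)| < ∞. Then for every measure μ on X × Σ with ∫ |b_i| dμ < ∞ for all i, there exist k ≤ m, weights c₁,...,c_k > 0 and parameters (x₁,σ₁),...,(x_k,σ_k) such that ∫ b_i dμ = Σ_{j=1}^k c_j b_i(x_j,σ_j) for all i = 1,...,m. -/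
open MeasureTheory

open scoped NNReal

/-- Weak separation of a point from a convex cone in finite dimension. -/
lemma richter_separation {V : Type*} [NormedAddCommGroup V] [NormedSpace ℝ V]
    [FiniteDimensional ℝ V] (C : Submodule ℝ≥0 V) (v : V) (hv : v ∉ C) :
    ∃ l : V →L[ℝ] ℝ, l ≠ 0 ∧ (∀ x ∈ C, 0 ≤ l x) ∧ l v ≤ 0 := by
  have hconv : Convex ℝ (C : Set V) := PointedCone.convex (R := ℝ) C
  have h0 : (0 : V) ∈ (C : Set V) := C.zero_mem
  by_cases hne : (interior (C : Set V)).Nonempty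
  · have hvi : v ∉ interior (C : Set V) := fun h => hv (interior_subset h)
    obtain ⟨l, hl⟩ := geometric_hahn_banach_open_point hconv.interior isOpen_interior hvi
    have hle : ∀ x ∈ C, l x ≤ l v := by
      intro x hx
      have hx' : x ∈ closure (interior (C : Set V)) := by
        rw [hconv.closure_interior_eq_closure_of_nonempty_interior hne]
        exact subset_closure hx
      have hcl : IsClosed {x | l x ≤ l v} := isClosed_le l.continuous continuous_const
      exact closure_minimal (fun y hy => (hl y hy).le) hcl hx'
    refine ⟨-l, ?_, ?_, ?_⟩
    · intro h
      obtain ⟨y, hy⟩ := hne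
      have hlt := hl y hy
      have : l = 0 := neg_eq_zero.mp h
      simp [this] at hlt
    · intro x hx
      by_contra hlt
      have hpos : 0 < l x := by simpa using hlt
      have h0v : 0 ≤ l v := by simpa using hle 0 h0
      have hs : 0 ≤ (l v + 1) / l x := by positivity
      have this : l (((l v + 1) / l x) • x) ≤ l v :=
        hle _ (PointedCone.smul_mem (R := ℝ) C hs hx)
      have e : l (((l v + 1) / l x) • x) = (l v + 1) / l x * l x := by simp
      rw [e, div_mul_cancel₀ _ hpos.ne'] at this
      linarith
    · simpa using hle 0 h0
  · have hspan : Submodule.span ℝ (C : Set V) ≠ ⊤ := by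
      intro h
      apply hne
      rw [hconv.interior_nonempty_iff_affineSpan_eq_top]
      have h1 := affineSpan_insert_zero (k := ℝ) (C : Set V)
      rw [Set.insert_eq_of_mem h0, h] at h1
      apply SetLike.coe_injective
      simpa using h1
    obtain ⟨l, hl0, hl⟩ := Submodule.exists_le_ker_of_lt_top _ hspan.lt_top
    have hz : ∀ x ∈ C, l x = 0 := fun x hx => hl (Submodule.subset_span hx)
    have hn : LinearMap.toContinuousLinearMap l ≠ 0 := by simpa using hl0
    rcases le_total (l v) 0 with h | h
    · exact ⟨LinearMap.toContinuousLinearMap l, hn, fun x hx => by simp [hz x hx], by simpa using h⟩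
    · exact ⟨-LinearMap.toContinuousLinearMap l, by simpa using hl0,
        fun x hx => by simp [hz x hx], by simpa using h⟩

/-- The integral lies in the conic hull of the range. -/
lemma richter_mem_cone {Ω : Type*} [MeasurableSpace Ω] (μ : Measure Ω) (n : ℕ) :
    ∀ (V : Type) [NormedAddCommGroup V] [NormedSpace ℝ V] [FiniteDimensional ℝ V]
      (f : Ω → V), Module.finrank ℝ V = n → Integrable f μ →
      ∫ ω, f ω ∂μ ∈ Submodule.span ℝ≥0 (Set.range f) := by
  induction n using Nat.strong_induction_on with
  | _ n ih =>
  intro V _ _ _ f hn hf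
  by_contra hv
  obtain ⟨l, hl0, hlC, hlv⟩ := richter_separation _ _ hv
  have hnonneg : ∀ ω, 0 ≤ l (f ω) := fun ω => hlC _ (Submodule.subset_span ⟨ω, rfl⟩)
  have hli : Integrable (fun ω => l (f ω)) μ := l.integrable_comp hf
  have hint : ∫ ω, l (f ω) ∂μ = l (∫ ω, f ω ∂μ) := l.integral_comp_comm hf
  have hz : ∫ ω, l (f ω) ∂μ = 0 :=
    le_antisymm (hint ▸ hlv) (integral_nonneg hnonneg)
  have hae : (fun ω => l (f ω)) =ᵐ[μ] 0 := (integral_eq_zero_iff_of_nonneg hnonneg hli).1 hz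
  classical
  let K : Submodule ℝ V := LinearMap.ker (l : V →ₗ[ℝ] ℝ)
  obtain ⟨π, hπ⟩ := LinearMap.exists_leftInverse_of_injective K.subtype (by simp)
  have hπK : ∀ x, l x = 0 → ((π x : K) : V) = x := by
    intro x hx
    have := LinearMap.congr_fun hπ (⟨x, hx⟩ : K)
    simpa using congrArg Subtype.val this
  let f' : Ω → V := fun ω => if l (f ω) = 0 then f ω else 0
  have hff' : f =ᵐ[μ] f' := by
    filter_upwards [hae] with ω hω
    have : l (f ω) = 0 := hω
    simp [f', this]
  have hf' : Integrable f' μ := hf.congr hff'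
  let P : V →L[ℝ] K := LinearMap.toContinuousLinearMap π
  have hlt : Module.finrank ℝ K < n := by
    rw [← hn]
    apply Submodule.finrank_lt
    intro h
    apply hl0
    ext x
    have : x ∈ K := h ▸ Submodule.mem_top
    exact this
  have key := ih _ hlt K (fun ω => P (f' ω)) rfl (P.integrable_comp hf')
  rw [P.integral_comp_comm hf', ← integral_congr_ae hff'] at key
  have hmap := Submodule.mem_map_of_mem (f := K.subtype.restrictScalars ℝ≥0) key
  rw [Submodule.map_span] at hmap
  have hPv : (K.subtype.restrictScalars ℝ≥0) (P (∫ ω, f ω ∂μ)) = ∫ ω, f ω ∂μ :=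
    hπK _ (hint ▸ hz)
  rw [hPv] at hmap
  apply hv
  refine Submodule.span_le.2 ?_ hmap
  rintro _ ⟨_, ⟨ω, rfl⟩, rfl⟩
  change ((π (f' ω) : K) : V) ∈ Submodule.span ℝ≥0 (Set.range f)
  by_cases h : l (f ω) = 0
  · have e : f' ω = f ω := by simp [f', h]
    rw [e, hπK _ h]
    exact Submodule.subset_span ⟨ω, rfl⟩
  · have e : f' ω = 0 := by simp [f', h]
    rw [e]
    simp

/-- Conic Caratheodory reduction. -/
lemma richter_caratheodory {Ω V : Type*} [AddCommGroup V] [Module ℝ V]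
    [FiniteDimensional ℝ V] (f : Ω → V) (v : V) (n : ℕ) :
    ∀ (t : Finset Ω) (c : Ω → ℝ), t.card = n → (∀ p ∈ t, 0 < c p) →
      ∑ p ∈ t, c p • f p = v →
      ∃ (s : Finset Ω) (d : Ω → ℝ), s.card ≤ Module.finrank ℝ V ∧ (∀ p ∈ s, 0 < d p) ∧
        ∑ p ∈ s, d p • f p = v := by
  induction n using Nat.strong_induction_on with
  | _ n ih =>
  intro t c hn hc hv
  by_cases hle : t.card ≤ Module.finrank ℝ V
  · exact ⟨t, c, hle, hc, hv⟩
  have hdep : ¬ LinearIndepOn ℝ f (t : Set Ω) := by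
    intro h
    apply hle
    have := LinearIndependent.fintype_card_le_finrank h
    simpa using this
  have hg : ∃ g : Ω → ℝ, ∑ p ∈ t, g p • f p = 0 ∧ ∃ p ∈ t, 0 < g p := by
    rw [linearIndepOn_finset_iff] at hdep
    push Not at hdep
    obtain ⟨g, hg, p, hp, hgp⟩ := hdep
    rcases lt_or_gt_of_ne hgp with h | h
    · exact ⟨fun q => -g q, by simp [hg], p, hp, by simpa using h⟩
    · exact ⟨g, hg, p, hp, h⟩
  obtain ⟨g, hg, p, hp, hgp⟩ := hg
  classical
  obtain ⟨q, hq, hmin⟩ := (t.filter fun z => 0 < g z).exists_min_image (fun z => c z / g z)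
    ⟨p, Finset.mem_filter.2 ⟨hp, hgp⟩⟩
  rw [Finset.mem_filter] at hq
  obtain ⟨hqt, hgq⟩ := hq
  let d : Ω → ℝ := fun z => c z - c q / g q * g z
  have hdq : d q = 0 := by simp [d, hgq.ne']
  have hd : ∀ z ∈ t, 0 ≤ d z := by
    intro z hz
    simp only [d, sub_nonneg]
    by_cases h : 0 < g z
    · rw [← le_div_iff₀ h]
      exact hmin z (Finset.mem_filter.2 ⟨hz, h⟩)
    · exact (mul_nonpos_of_nonneg_of_nonpos (div_nonneg (hc q hqt).le hgq.le)
        (not_lt.1 h)).trans (hc z hz).le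
  have hdsum : ∑ z ∈ t, d z • f z = v := by
    simp only [d, sub_smul, mul_smul, Finset.sum_sub_distrib, ← Finset.smul_sum, hg, hv,
      smul_zero, sub_zero]
  refine ih (t.filter fun z => 0 < d z).card ?_ (t.filter fun z => 0 < d z) d rfl
    (fun z hz => (Finset.mem_filter.1 hz).2) ?_
  · rw [← hn]
    apply Finset.card_lt_card
    rw [Finset.filter_ssubset]
    exact ⟨q, hqt, by simp [hdq]⟩
  · rw [← hdsum]
    apply Finset.sum_filter_of_ne
    intro z hz hne
    refine lt_of_le_of_ne (hd z hz) ?_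
    intro h
    apply hne
    rw [← h, zero_smul]

/-- Richter's theorem for mixtures: every moment sequence of a mixture measure μ on
X × Σ with respect to the moment functions b_i(x,σ) = ∫ a_i dδ_{x,σ} already arises
from a finite mixture with at most m components. -/
theorem richter_mixtures (X Y : Type*) [MeasurableSpace X] [MeasurableSpace Y]
    (m : ℕ) (a : Fin m → X → ℝ) (δ : X → Y → Measure X)
    (hprob : ∀ x σ, IsProbabilityMeasure (δ x σ))
    (hfin : ∀ i x σ, Integrable (a i) (δ x σ))
    (μ : Measure (X × Y))
    (hint : ∀ i, Integrable (fun p : X × Y => ∫ y, a i y ∂ δ p.1 p.2) μ) :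
    ∃ k ≤ m, ∃ (c : Fin k → ℝ) (ξ : Fin k → X × Y),
      (∀ j, 0 < c j) ∧
      ∀ i, (∫ p : X × Y, (∫ y, a i y ∂ δ p.1 p.2) ∂μ) =
        ∑ j, c j * ∫ y, a i y ∂ δ (ξ j).1 (ξ j).2 := by
  classical
  let f : X × Y → (Fin m → ℝ) := fun p i => ∫ y, a i y ∂ δ p.1 p.2
  have hf : Integrable f μ := Integrable.of_eval hint
  have hmem := richter_mem_cone μ _ (Fin m → ℝ) f rfl hf
  rw [Finsupp.mem_span_range_iff_exists_finsupp] at hmem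
  obtain ⟨w, hw⟩ := hmem
  obtain ⟨s, d, hs, hd, hsum⟩ := richter_caratheodory f (∫ p, f p ∂μ) _ w.support
    (fun p => (w p : ℝ)) rfl (fun p hp => by
      have := Finsupp.mem_support_iff.1 hp
      exact_mod_cast pos_iff_ne_zero.2 this) hw
  refine ⟨s.card, by simpa using hs, fun j => d (s.equivFin.symm j),
    fun j => (s.equivFin.symm j : X × Y), fun j => hd _ (s.equivFin.symm j).2, fun i => ?_⟩
  have h1 : (∫ p, f p ∂μ) i = ∫ p, f p i ∂μ := eval_integral (fun i => hint i) i
  change ∫ p, f p i ∂μ = ∑ j, d (s.equivFin.symm j) * f (s.equivFin.symm j) i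
  rw [← h1, ← hsum, Finset.sum_apply, ← Finset.sum_coe_sort s]
  rw [← Equiv.sum_comp s.equivFin.symm]
  simp
end

section
/- Let d₁ < d₂ < ... < d_m be nonnegative integers and A = {x^{d₁}, ..., x^{d_m}} on X = (0,∞). Then the Carathéodory number of A equals ⌈m/2⌉: every moment sequence of a measure on (0,∞) with finite A-moments has a representing measure consisting of at most ⌈m/2⌉ Dirac measures at points of (0,∞), and ⌈m/2⌉ atoms are necessary for some moment sequences. -/
open MeasureTheory

theorem CN_desc (p : Polynomial ℝ) (hp : p ≠ 0) :
    p.roots.countP (0 < ·) + 1 ≤ p.support.card := by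
  have key : ∀ n (p : Polynomial ℝ), p.support.card = n → p ≠ 0 →
      p.signVariations + 1 ≤ n := by
    intro n
    induction n with
    | zero =>
      intro p h hp
      simp at h
      exact absurd h hp
    | succ n ih =>
      intro p h hp
      by_cases h0 : p.eraseLead = 0
      · have : p.signVariations = 0 := by
          have h1 := p.eraseLead_add_monomial_natDegree_leadingCoeff
          rw [h0, zero_add] at h1
          rw [← h1]; simp
        omega
      · have h1 := ih p.eraseLead (Polynomial.card_support_eraseLead' h) h0
        have h2 := Polynomial.signVariations_le_eraseLead_succ (P := p)
        omega
  have := key _ p rfl hp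
  have := Polynomial.roots_countP_pos_le_signVariations (P := p)
  omega

theorem CN_sum (p : Polynomial ℝ) (Z : Finset ℝ) (hZ : ∀ z ∈ Z, 0 < z) :
    ∑ z ∈ Z, p.rootMultiplicity z ≤ p.roots.countP (0 < ·) := by
  classical
  rw [Multiset.countP_eq_card_filter]
  calc ∑ z ∈ Z, p.rootMultiplicity z
      = ∑ z ∈ Z, (p.roots.filter (0 < ·)).count z := by
        refine Finset.sum_congr rfl fun z hz => ?_
        rw [Multiset.count_filter_of_pos (hZ z hz), Polynomial.count_roots]
    _ ≤ ∑ z ∈ Z ∪ (p.roots.filter (0 < ·)).toFinset, (p.roots.filter (0 < ·)).count z :=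
        Finset.sum_le_sum_of_subset Finset.subset_union_left
    _ = _ := Multiset.sum_count_eq_card (fun a ha => by simp at ha ⊢; tauto)

theorem CN_double (p : Polynomial ℝ) (hp : p ≠ 0) (z : ℝ) (hz : p.eval z = 0)
    (h : ∀ᶠ x in nhds z, 0 ≤ p.eval x) : 2 ≤ p.rootMultiplicity z := by
  have hmin : IsLocalMin (fun x => p.eval x) z := by
    filter_upwards [h] with x hx
    simpa [hz] using hx
  have := hmin.hasDerivAt_eq_zero (p.hasDerivAt z)
  exact (Polynomial.one_lt_rootMultiplicity_iff_isRoot hp).2 ⟨hz, this⟩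

theorem CN_count1 (p : Polynomial ℝ) (hp : p ≠ 0) (a b : ℝ) (ha : 0 < a)
    (hnn : ∀ x ∈ Set.Icc a b, 0 ≤ p.eval x) (Z : Finset ℝ)
    (hZ : ∀ z ∈ Z, z ∈ Set.Icc a b ∧ p.eval z = 0) :
    2 * Z.card ≤ p.roots.countP (0 < ·) + 2 := by
  classical
  have h1 := CN_sum p Z (fun z hz => ha.trans_le (hZ z hz).1.1)
  have h2 : ∑ z ∈ Z, 2 ≤ ∑ z ∈ Z, (p.rootMultiplicity z + (if z = a then 1 else 0)
      + (if z = b then 1 else 0)) := by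
    refine Finset.sum_le_sum fun z hz => ?_
    obtain ⟨⟨hza, hzb⟩, hz0⟩ := hZ z hz
    have hm : 1 ≤ p.rootMultiplicity z := (Polynomial.rootMultiplicity_pos hp).2 hz0
    by_cases h3 : z = a
    · rw [if_pos h3]; omega
    by_cases h4 : z = b
    · rw [if_pos h4]; omega
    have := CN_double p hp z hz0 (by
      filter_upwards [Icc_mem_nhds (lt_of_le_of_ne hza (Ne.symm h3)) (lt_of_le_of_ne hzb h4)]
        with x hx using hnn x hx)
    omega
  rw [Finset.sum_add_distrib, Finset.sum_add_distrib, Finset.sum_const, smul_eq_mul,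
    Finset.sum_ite_eq', Finset.sum_ite_eq'] at h2
  split_ifs at h2 <;> omega

theorem CN_count2 (p : Polynomial ℝ) (hdeg : 0 < p.degree) (hlead : 0 < p.leadingCoeff)
    (a b : ℝ) (ha : 0 < a) (hab : a < b)
    (hnn : ∀ x ∈ Set.Icc a b, 0 ≤ p.eval x) (Z : Finset ℝ)
    (hZ : ∀ z ∈ Z, z ∈ Set.Icc a b ∧ p.eval z = 0) :
    2 * Z.card ≤ p.roots.countP (0 < ·) + 1 := by
  classical
  have hp : p ≠ 0 := by rintro rfl; simp at hlead
  have htop := p.tendsto_atTop_of_leadingCoeff_nonneg hdeg hlead.le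
  have hInteg : ∀ z ∈ Z, z ≠ a → z ≠ b → 2 ≤ p.rootMultiplicity z := by
    intro z hz h3 h4
    obtain ⟨⟨hza, hzb⟩, hz0⟩ := hZ z hz
    exact CN_double p hp z hz0 (by
      filter_upwards [Icc_mem_nhds (lt_of_le_of_ne hza (Ne.symm h3)) (lt_of_le_of_ne hzb h4)]
        with x hx using hnn x hx)
  have hpos : ∀ z ∈ Z, 1 ≤ p.rootMultiplicity z := fun z hz =>
    (Polynomial.rootMultiplicity_pos hp).2 (hZ z hz).2
  by_cases hc : ∃ c, b < c ∧ p.eval c = 0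
  · obtain ⟨c, hbc, hc0⟩ := hc
    have hcZ : c ∉ Z := fun h => absurd (hZ c h).1.2 (not_le.2 hbc)
    have h1 := CN_sum p (insert c Z) (fun z hz => by
      rcases Finset.mem_insert.1 hz with rfl | hz
      · linarith
      · exact ha.trans_le (hZ z hz).1.1)
    rw [Finset.sum_insert hcZ] at h1
    have hcm : 1 ≤ p.rootMultiplicity c := (Polynomial.rootMultiplicity_pos hp).2 hc0
    have h2 : ∑ z ∈ Z, 2 ≤ ∑ z ∈ Z, (p.rootMultiplicity z + (if z = a then 1 else 0)
        + (if z = b then 1 else 0)) := by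
      refine Finset.sum_le_sum fun z hz => ?_
      have hm := hpos z hz
      by_cases h3 : z = a
      · rw [if_pos h3]; omega
      by_cases h4 : z = b
      · rw [if_pos h4]; omega
      have := hInteg z hz h3 h4
      omega
    rw [Finset.sum_add_distrib, Finset.sum_add_distrib, Finset.sum_const, smul_eq_mul,
      Finset.sum_ite_eq', Finset.sum_ite_eq'] at h2
    split_ifs at h2 <;> omega
  · have hgt : ∀ x, b < x → 0 ≤ p.eval x := by
      intro x hx
      by_contra hneg
      push Not at hneg
      obtain ⟨y, hy1, hy2⟩ := ((htop.eventually_ge_atTop 0).and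
        (Filter.eventually_ge_atTop x)).exists
      have := intermediate_value_Icc hy2 (p.continuous.continuousOn)
      obtain ⟨c, hc1, hc2⟩ := this ⟨hneg.le, hy1⟩
      exact hc ⟨c, by linarith [hc1.1], hc2⟩
    have h1 := CN_sum p Z (fun z hz => ha.trans_le (hZ z hz).1.1)
    have h2 : ∑ z ∈ Z, 2 ≤ ∑ z ∈ Z, (p.rootMultiplicity z + (if z = a then 1 else 0)) := by
      refine Finset.sum_le_sum fun z hz => ?_
      have hm := hpos z hz
      by_cases h3 : z = a
      · rw [if_pos h3]; omega
      by_cases h4 : z = b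
      · have := CN_double p hp z (hZ z hz).2 (by
          filter_upwards [Ioi_mem_nhds (h4 ▸ hab)] with x hx
          by_cases hxb : x ≤ b
          · exact hnn x ⟨le_of_lt hx, hxb⟩
          · exact hgt x (not_le.1 hxb))
        omega
      have := hInteg z hz h3 h4
      omega
    rw [Finset.sum_add_distrib, Finset.sum_const, smul_eq_mul,
      Finset.sum_ite_eq'] at h2
    split_ifs at h2 <;> omega

theorem CN_support {E : Type*} [NormedAddCommGroup E] [NormedSpace ℝ E] [FiniteDimensional ℝ E]
    (C : Set E) (hC : Convex ℝ C) (hne : C.Nonempty) (s : E) (hs : s ∉ interior C) :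
    ∃ q : E →ₗ[ℝ] ℝ, q ≠ 0 ∧ ∀ y ∈ C, q s ≤ q y := by
  by_cases hInteg : (interior C).Nonempty
  · obtain ⟨f, hf⟩ := geometric_hahn_banach_open_point hC.interior isOpen_interior hs
    refine ⟨-f.toLinearMap, ?_, ?_⟩
    · intro h
      obtain ⟨y, hy⟩ := hInteg
      have := hf y hy
      have h1 : ∀ z, f z = 0 := fun z => by
        have := LinearMap.congr_fun h z
        simpa using this
      simp [h1] at this
    · intro y hy
      have hy' : y ∈ closure (interior C) := by
        rw [hC.closure_interior_eq_closure_of_nonempty_interior hInteg]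
        exact subset_closure hy
      have : f y ≤ f s := by
        refine closure_minimal (t := {z | f z ≤ f s}) (fun z hz => (hf z hz).le) ?_ hy'
        exact isClosed_le f.continuous continuous_const
      simpa using this
  · rw [hC.interior_nonempty_iff_affineSpan_eq_top] at hInteg
    have hdir : (affineSpan ℝ C).direction < ⊤ := by
      rw [lt_top_iff_ne_top]
      intro h
      exact hInteg ((AffineSubspace.direction_eq_top_iff_of_nonempty
        ((affineSpan_nonempty ℝ).2 hne)).1 h)
    obtain ⟨f, hf0, hf⟩ := Submodule.exists_le_ker_of_lt_top _ hdir
    obtain ⟨y0, hy0⟩ := hne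
    have hconst : ∀ y ∈ C, f y = f y0 := by
      intro y hy
      have : y - y0 ∈ (affineSpan ℝ C).direction :=
        AffineSubspace.vsub_mem_direction (subset_affineSpan ℝ C hy) (subset_affineSpan ℝ C hy0)
      have := hf this
      rw [LinearMap.mem_ker, map_sub, sub_eq_zero] at this
      exact this
    rcases le_total (f s) (f y0) with h | h
    · exact ⟨f, hf0, fun y hy => by rw [hconst y hy]; exact h⟩
    · exact ⟨-f, neg_ne_zero.2 hf0, fun y hy => by simp [hconst y hy, h]⟩

theorem CN_face {E : Type*} [AddCommGroup E] [Module ℝ E] (S : Set E) (q : E →ₗ[ℝ] ℝ) (y : E)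
    (hy : y ∈ convexHull ℝ S) (hq : ∀ x ∈ S, q y ≤ q x) :
    y ∈ convexHull ℝ {x ∈ S | q x = q y} := by
  classical
  obtain ⟨ι, _, w, z, hw0, hw1, hz, hsum⟩ := mem_convexHull_iff_exists_fintype.1 hy
  have h1 : ∑ i, w i * (q (z i) - q y) = 0 := by
    have := congrArg q hsum
    simp only [map_sum, map_smul, smul_eq_mul] at this
    simp only [mul_sub, Finset.sum_sub_distrib, ← Finset.sum_mul, hw1, this, one_mul, sub_self]
  have h2 : ∀ i, w i * (q (z i) - q y) = 0 := by
    intro i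
    exact (Finset.sum_eq_zero_iff_of_nonneg (fun i _ => mul_nonneg (hw0 i)
      (sub_nonneg.2 (hq _ (hz i))))).1 h1 i (Finset.mem_univ i)
  have h3 : y = (Finset.univ.filter (fun i => w i ≠ 0)).centerMass w z := by
    rw [Finset.centerMass_filter_ne_zero, Finset.centerMass_eq_of_sum_1 _ _ hw1, hsum]
  rw [h3]
  refine Finset.centerMass_mem_convexHull _ (fun i _ => hw0 i) ?_ ?_
  · rw [Finset.sum_filter_ne_zero, hw1]; exact one_pos
  · intro i hi
    rw [← h3]
    refine ⟨hz i, ?_⟩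
    have := (mul_eq_zero.1 (h2 i)).resolve_left (Finset.mem_filter.1 hi).2
    linarith

theorem CN_compact {E : Type*} [NormedAddCommGroup E] [NormedSpace ℝ E] [FiniteDimensional ℝ E]
    (S : Set E) (hS : IsCompact S) : IsCompact (convexHull ℝ S) := by
  classical
  set N := Module.finrank ℝ E + 1 with hN
  have himg : convexHull ℝ S = (fun p : (Fin N → ℝ) × (Fin N → E) => ∑ i, p.1 i • p.2 i) ''
      (stdSimplex ℝ (Fin N) ×ˢ Set.univ.pi (fun _ => S)) := by
    apply Set.Subset.antisymm
    · intro x hx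
      rw [convexHull_eq_union] at hx
      simp only [Set.mem_iUnion] at hx
      obtain ⟨t, htS, hind, hxt⟩ := hx
      have hcard : Fintype.card t ≤ N := by
        refine hind.card_le_finrank_succ.trans ?_
        have := Submodule.finrank_le (vectorSpan ℝ (Set.range ((↑) : t → E)))
        omega
      have hne : Nonempty t := by
        by_contra hne
        have : t = ∅ := Finset.eq_empty_of_forall_notMem (by simpa using hne)
        simp [this] at hxt
      obtain ⟨g⟩ : Nonempty (t ↪ Fin N) :=
        Function.Embedding.nonempty_of_card_le (by simpa using hcard)
      have hsurj := Function.invFun_surjective g.injective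
      set f : Fin N → E := fun i => ((Function.invFun g i : t) : E) with hf
      have hrange : (t : Set E) = Set.range f := by
        ext y; constructor
        · intro hy
          obtain ⟨i, hi⟩ := hsurj ⟨y, hy⟩
          exact ⟨i, by simp [hf, hi]⟩
        · rintro ⟨i, rfl⟩; simp [hf]
      rw [hrange] at hxt
      have h1 : Set.range f = (Fintype.linearCombination ℝ f) ''
          (Set.range fun i : Fin N => Pi.single i (1 : ℝ)) := by
        rw [← Set.range_comp]
        congr 1; ext i; simp
      rw [h1, ← LinearMap.image_convexHull, convexHull_rangle_single_eq_stdSimplex] at hxt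
      obtain ⟨w, hw, hwx⟩ := hxt
      refine ⟨(w, f), ⟨hw, fun i _ => htS ?_⟩, ?_⟩
      · rw [hrange]; exact ⟨i, rfl⟩
      · rw [← hwx]; simp [Fintype.linearCombination_apply]
    · rintro x ⟨⟨w, z⟩, ⟨hw, hz⟩, rfl⟩
      exact mem_convexHull_of_exists_fintype w z hw.1 hw.2 (fun i => hz i (Set.mem_univ i)) rfl
  rw [himg]
  refine IsCompact.image ((isCompact_stdSimplex ℝ _).prod (isCompact_univ_pi fun _ => hS)) ?_
  fun_prop

theorem CN_functional {n : ℕ} (q : (Fin n → ℝ) →ₗ[ℝ] ℝ) (y : Fin n → ℝ) :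
    q y = ∑ i, q (Pi.single i 1) * y i := by
  conv_lhs => rw [← Finset.univ_sum_single y]
  rw [map_sum]
  refine Finset.sum_congr rfl fun i _ => ?_
  have : (Pi.single i (y i) : Fin n → ℝ) = y i • Pi.single i 1 := by
    rw [← Pi.single_smul]; simp
  rw [this, map_smul, smul_eq_mul, mul_comm]

theorem CN_coeff {n : ℕ} (e : Fin n → ℕ) (he : Function.Injective e) (a : Fin n → ℝ) (i : Fin n) :
    (∑ j, Polynomial.C (a j) * Polynomial.X ^ e j).coeff (e i) = a i := by
  rw [Polynomial.finsetSum_coeff, Finset.sum_eq_single i]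
  · simp
  · intro j _ hj
    rw [Polynomial.coeff_C_mul_X_pow, if_neg]
    intro h; exact hj (he h).symm
  · simp

theorem CN_coeff' {n : ℕ} (e : Fin n → ℕ) (a : Fin n → ℝ) (k : ℕ) (hk : ∀ j, e j ≠ k) :
    (∑ j, Polynomial.C (a j) * Polynomial.X ^ e j).coeff k = 0 := by
  rw [Polynomial.finsetSum_coeff]
  refine Finset.sum_eq_zero fun j _ => ?_
  rw [Polynomial.coeff_C_mul_X_pow, if_neg]
  exact fun h => hk j h.symm

theorem CN_supp {n : ℕ} (e : Fin n → ℕ) (a : Fin n → ℝ) :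
    (∑ j, Polynomial.C (a j) * Polynomial.X ^ e j).support ⊆ Finset.univ.image e := by
  intro k hk
  by_contra h
  rw [Polynomial.mem_support_iff] at hk
  exact hk (CN_coeff' e a k (fun j hj => h (Finset.mem_image.2 ⟨j, Finset.mem_univ j, hj⟩)))

theorem CN_step {n : ℕ} (e : Fin n → ℕ) (he : Function.Injective e) (hpos : ∀ i, 0 < e i)
    (a b : ℝ) (ha : 0 < a) (hab : a < b) (s : Fin n → ℝ)
    (hs : s ∈ convexHull ℝ ((fun x : ℝ => fun i => x ^ e i) '' Set.Icc a b)) :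
    ∃ Z : Finset ℝ, (∀ z ∈ Z, 0 < z) ∧ 2 * Z.card ≤ n + 2 ∧
      s ∈ convexHull ℝ ((fun x : ℝ => fun i => x ^ e i) '' (Z : Set ℝ)) := by
  classical
  set γ : ℝ → Fin n → ℝ := fun x => fun i => x ^ e i with hγ
  obtain ⟨D, hD⟩ : ∃ D : ℕ, 0 < D ∧ ∀ i, e i < D :=
    ⟨(∑ i, e i) + 1, by omega, fun i => Nat.lt_succ_of_le
      (Finset.single_le_sum (f := e) (fun _ _ => Nat.zero_le _) (Finset.mem_univ i))⟩
  obtain ⟨hD0, hD⟩ := hD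
  set Γ : ℝ → (Fin n → ℝ) × ℝ := fun x => (γ x, x ^ D) with hΓ
  have hΓc : Continuous Γ := by fun_prop
  set S := Γ '' Set.Icc a b with hS
  have hCc : IsCompact (convexHull ℝ S) := CN_compact S (isCompact_Icc.image hΓc)
  have hfst : (LinearMap.fst ℝ (Fin n → ℝ) ℝ) '' (convexHull ℝ S) =
      convexHull ℝ (γ '' Set.Icc a b) := by
    rw [LinearMap.image_convexHull, hS, ← Set.image_comp]; rfl
  obtain ⟨y, ⟨hyC, hys⟩, hymin⟩ : ∃ y ∈ convexHull ℝ S ∩ {y | y.1 = s},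
      ∀ y' ∈ convexHull ℝ S ∩ {y | y.1 = s}, y.2 ≤ y'.2 := by
    have hcomp : IsCompact (convexHull ℝ S ∩ {y : (Fin n → ℝ) × ℝ | y.1 = s}) :=
      hCc.inter_right (isClosed_eq continuous_fst continuous_const)
    refine hcomp.exists_isMinOn ?_ continuous_snd.continuousOn
    rw [← hfst] at hs
    obtain ⟨y, hy, hy'⟩ := hs
    exact ⟨y, hy, hy'⟩
  set U : Set ((Fin n → ℝ) × ℝ) := {u | ∃ t, t ≤ u.2 ∧ (u.1, t) ∈ convexHull ℝ S} with hU
  have hUconv : Convex ℝ U := by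
    rintro u ⟨t, ht, htC⟩ v ⟨t', ht', htC'⟩ α β hα hβ hαβ
    refine ⟨α * t + β * t', ?_, ?_⟩
    · simp only [Prod.snd_add, Prod.smul_snd, smul_eq_mul]
      gcongr
    · have := convex_convexHull ℝ S htC htC' hα hβ hαβ
      simpa using this
  have hyU : y ∉ interior U := by
    intro h
    have hcont : Filter.Tendsto (fun r : ℝ => (y.1, y.2 - r)) (nhdsWithin 0 (Set.Ioi 0)) (nhds y) := by
      have : Continuous (fun r : ℝ => (y.1, y.2 - r)) := by fun_prop
      have := this.tendsto 0
      simp only [sub_zero] at this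
      exact this.mono_left nhdsWithin_le_nhds
    have h1 := hcont.eventually (mem_interior_iff_mem_nhds.1 h)
    obtain ⟨r, hr, hr0⟩ := (h1.and self_mem_nhdsWithin).exists
    obtain ⟨t, ht, htC⟩ := hr
    have := hymin (y.1, t) ⟨htC, hys⟩
    simp only [Set.mem_Ioi] at ht this hr0
    linarith
  obtain ⟨q, hq0, hq⟩ := CN_support U hUconv ⟨y, y.2, le_rfl, hyC⟩ y hyU
  set A : Fin n → ℝ := fun i => q (Pi.single i 1, 0) with hA
  set B : ℝ := q (0, 1) with hB
  have hqe : ∀ u : (Fin n → ℝ) × ℝ, q u = ∑ i, A i * u.1 i + B * u.2 := by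
    intro u
    have h1 := CN_functional (q.comp (LinearMap.inl ℝ (Fin n → ℝ) ℝ)) u.1
    have h2 : u = LinearMap.inl ℝ (Fin n → ℝ) ℝ u.1 + u.2 • ((0, 1) : (Fin n → ℝ) × ℝ) := by
      ext <;> simp
    conv_lhs => rw [h2, map_add, map_smul]
    rw [← LinearMap.comp_apply, h1]
    simp [hA, hB, mul_comm]
  have hB0 : 0 ≤ B := by
    have := hq (y.1, y.2 + 1) ⟨y.2, by simp, hyC⟩
    rw [hqe, hqe (y.1, y.2 + 1)] at this
    simp only at this
    linarith
  have hqΓ : ∀ x ∈ Set.Icc a b, q y ≤ q (Γ x) := fun x hx =>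
    hq _ ⟨(Γ x).2, le_rfl, subset_convexHull ℝ S ⟨x, hx, rfl⟩⟩
  set p0 : Polynomial ℝ := ∑ j, Polynomial.C (A j) * Polynomial.X ^ e j with hp0
  set p1 : Polynomial ℝ := p0 + Polynomial.C (- q y) with hp1
  set p : Polynomial ℝ := p1 + Polynomial.C B * Polynomial.X ^ D with hp
  have hpe : ∀ x, p.eval x = q (Γ x) - q y := by
    intro x
    rw [hqe (Γ x)]
    simp [hp, hp1, hp0, Polynomial.eval_finsetSum, hΓ, hγ]
    ring
  have hp1s : p1.support ⊆ insert 0 (Finset.univ.image e) := by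
    refine Polynomial.support_add.trans (Finset.union_subset ?_ ?_)
    · exact (CN_supp e A).trans (Finset.subset_insert _ _)
    · exact (Polynomial.support_C_subset _).trans (by simp)
  have hp1card : p1.support.card ≤ n + 1 := by
    refine (Finset.card_le_card hp1s).trans ((Finset.card_insert_le _ _).trans ?_)
    have := Finset.card_image_le (s := (Finset.univ : Finset (Fin n))) (f := e)
    simp at this
    omega
  have hpcard : p.support.card ≤ n + 2 := by
    have h1 := Finset.card_le_card (Polynomial.support_add (p := p1)
      (q := Polynomial.C B * Polynomial.X ^ D))
    have h2 := Finset.card_union_le p1.support (Polynomial.C B * Polynomial.X ^ D).support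
    have h3 := Polynomial.card_support_C_mul_X_pow_le_one (c := B) (n := D)
    rw [← hp] at h1
    omega
  have hnn : ∀ x ∈ Set.Icc a b, 0 ≤ p.eval x := fun x hx => by
    rw [hpe]; linarith [hqΓ x hx]
  have hpcoeff : ∀ i, p.coeff (e i) = A i := by
    intro i
    have h1 := (hD i).ne
    have h2 := (hpos i).ne'
    rw [hp, hp1, Polynomial.coeff_add, Polynomial.coeff_add, hp0, CN_coeff e he,
      Polynomial.coeff_C_mul_X_pow, if_neg h1, Polynomial.coeff_C, if_neg h2]
    simp
  have hpD : p.coeff D = B := by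
    rw [hp, hp1, Polynomial.coeff_add, Polynomial.coeff_add, hp0,
      CN_coeff' e A D (fun j => (hD j).ne),
      Polynomial.coeff_C_mul_X_pow, if_pos rfl, Polynomial.coeff_C, if_neg hD0.ne']
    simp
  have hpne : p ≠ 0 := by
    intro h
    apply hq0
    ext1
    · ext i; have := hpcoeff i; rw [h] at this; simpa [hA] using this.symm
    · ext; rw [h] at hpD; simpa [hB] using hpD.symm
  set Z : Finset ℝ := p.roots.toFinset.filter (fun z => z ∈ Set.Icc a b) with hZ
  have hZmem : ∀ z, z ∈ Z ↔ z ∈ Set.Icc a b ∧ p.eval z = 0 := by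
    intro z
    rw [hZ, Finset.mem_filter, Multiset.mem_toFinset, Polynomial.mem_roots hpne,
      Polynomial.IsRoot.def, and_comm]
  refine ⟨Z, fun z hz => ha.trans_le ((hZmem z).1 hz).1.1, ?_, ?_⟩
  · rcases hB0.eq_or_lt with hB0 | hB0
    · have hpp1 : p = p1 := by rw [hp, ← hB0]; simp
      have h1 := CN_desc p hpne
      have h2 := CN_count1 p hpne a b ha hnn Z (fun z hz => (hZmem z).1 hz)
      rw [hpp1] at h1 h2
      omega
    · have hdegle : p.natDegree ≤ D := by
        rw [Polynomial.natDegree_le_iff_coeff_eq_zero]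
        intro N hN
        rw [hp, hp1, Polynomial.coeff_add, Polynomial.coeff_add, hp0,
          CN_coeff' e A N (fun j => ((hD j).trans hN).ne),
          Polynomial.coeff_C_mul_X_pow, if_neg hN.ne', Polynomial.coeff_C,
          if_neg (hD0.trans hN).ne']
        simp
      have hdeg : p.natDegree = D :=
        le_antisymm hdegle (Polynomial.le_natDegree_of_ne_zero (by rw [hpD]; exact hB0.ne'))
      have h1 := CN_desc p hpne
      have h2 := CN_count2 p (Polynomial.natDegree_pos_iff_degree_pos.1 (by omega))
        (by rw [Polynomial.leadingCoeff, hdeg, hpD]; exact hB0) a b ha hab hnn Z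
        (fun z hz => (hZmem z).1 hz)
      omega
  · have h1 := CN_face S q y hyC (by rintro _ ⟨x, hx, rfl⟩; exact hqΓ x hx)
    have h2 : y ∈ convexHull ℝ (Γ '' (Z : Set ℝ)) := by
      refine convexHull_mono ?_ h1
      rintro _ ⟨⟨x, hx, rfl⟩, hx2⟩
      exact ⟨x, (hZmem x).2 ⟨hx, by rw [hpe, hx2, sub_self]⟩, rfl⟩
    have h3 : (LinearMap.fst ℝ (Fin n → ℝ) ℝ) '' (convexHull ℝ (Γ '' (Z : Set ℝ))) =
        convexHull ℝ (γ '' (Z : Set ℝ)) := by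
      rw [LinearMap.image_convexHull, ← Set.image_comp]; rfl
    rw [← h3]
    exact ⟨y, h2, hys⟩

theorem CN_richter {n : ℕ} (e : Fin n → ℕ) (he : Function.Injective e) (hpos : ∀ i, 0 < e i)
    (ν : Measure ℝ) [IsProbabilityMeasure ν] (hν : ∀ᵐ x ∂ν, 0 < x)
    (hInteg : ∀ i, Integrable (fun x : ℝ => x ^ e i) ν) :
    (fun i => ∫ x : ℝ, x ^ e i ∂ν) ∈
      convexHull ℝ ((fun x : ℝ => fun i => x ^ e i) '' Set.Ioi 0) := by
  classical
  set γ : ℝ → Fin n → ℝ := fun x => fun i => x ^ e i with hγ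
  set s : Fin n → ℝ := fun i => ∫ x : ℝ, x ^ e i ∂ν with hs
  by_contra hcon
  obtain ⟨q, hq0, hq⟩ := CN_support _ (convex_convexHull ℝ (γ '' Set.Ioi 0))
    ⟨γ 1, subset_convexHull ℝ _ ⟨1, by simp, rfl⟩⟩ s (fun h => hcon (interior_subset h))
  set A : Fin n → ℝ := fun i => q (Pi.single i 1) with hA
  set p : Polynomial ℝ := ∑ j, Polynomial.C (A j) * Polynomial.X ^ e j + Polynomial.C (- q s)
    with hp
  have hpe : ∀ x, p.eval x = ∑ i, A i * x ^ e i - q s := by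
    intro x
    simp [hp, Polynomial.eval_finsetSum, sub_eq_add_neg]
  have hpe' : ∀ x, p.eval x = q (γ x) - q s := by
    intro x; rw [hpe, CN_functional q (γ x)]
  have hpne : p ≠ 0 := by
    intro h
    apply hq0
    ext i
    have : p.coeff (e i) = A i := by
      rw [hp, Polynomial.coeff_add, CN_coeff e he, Polynomial.coeff_C, if_neg (hpos i).ne']
      simp
    rw [h] at this
    simpa [hA] using this.symm
  have hpi : Integrable (fun x => p.eval x) ν := by
    simp_rw [hpe]
    exact (integrable_finsetSum _ fun i _ => (hInteg i).const_mul _).sub (integrable_const _)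
  have hp0 : ∫ x, p.eval x ∂ν = 0 := by
    simp_rw [hpe]
    rw [integral_sub (integrable_finsetSum _ fun i _ => (hInteg i).const_mul _)
      (integrable_const _), integral_finsetSum _ (fun i _ => (hInteg i).const_mul _)]
    simp_rw [integral_const_mul]
    rw [CN_functional q s]
    simp [hs, hA]
  have hpnn : 0 ≤ᵐ[ν] fun x => p.eval x := by
    filter_upwards [hν] with x hx
    have := hq (γ x) (subset_convexHull ℝ _ ⟨x, hx, rfl⟩)
    simp only [Pi.zero_apply]
    rw [hpe']; linarith
  have hae := (integral_eq_zero_iff_of_nonneg_ae hpnn hpi).1 hp0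
  set F : Set ℝ := {x | x ∈ p.roots.toFinset ∧ 0 < x} with hF
  have hFfin : F.Finite := (p.roots.toFinset.finite_toSet).subset (fun x hx => hx.1)
  have hmem : ∀ᵐ x ∂ν, γ x ∈ convexHull ℝ (γ '' F) := by
    filter_upwards [hν, hae] with x hx hx0
    refine subset_convexHull ℝ _ ⟨x, ⟨?_, hx⟩, rfl⟩
    rw [Multiset.mem_toFinset, Polynomial.mem_roots hpne]
    exact hx0
  have hγi : Integrable γ ν := Integrable.of_eval hInteg
  have h1 := (convex_convexHull ℝ (γ '' F)).integral_mem
    ((hFfin.image γ).isClosed_convexHull ℝ) hmem hγi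
  have h2 : ∫ x, γ x ∂ν = s := by
    ext i
    rw [eval_integral hInteg]
  rw [h2] at h1
  exact hcon (convexHull_mono (Set.image_mono (fun x hx => hx.2)) h1)

theorem CN_atoms {n : ℕ} (e : Fin n → ℕ) (Z : Finset ℝ) (hZ : ∀ z ∈ Z, 0 < z) (s : Fin n → ℝ)
    (hs : s ∈ convexHull ℝ ((fun x : ℝ => fun i => x ^ e i) '' (Z : Set ℝ))) :
    ∃ k ≤ Z.card, ∃ (c : Fin k → ℝ) (x : Fin k → ℝ), (∀ j, 0 < c j ∧ 0 < x j) ∧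
      ∑ j, c j = 1 ∧ ∀ i, s i = ∑ j, c j * x j ^ e i := by
  classical
  set γ : ℝ → Fin n → ℝ := fun x => fun i => x ^ e i with hγ
  rw [← Finset.coe_image, Finset.mem_convexHull'] at hs
  obtain ⟨w, hw0, hw1, hws⟩ := hs
  have hr : ∀ y : Fin n → ℝ, ∃ z : ℝ, y ∈ Z.image γ → z ∈ Z ∧ γ z = y := by
    intro y
    by_cases hy : y ∈ Z.image γ
    · obtain ⟨z, hz, hzy⟩ := Finset.mem_image.1 hy
      exact ⟨z, fun _ => ⟨hz, hzy⟩⟩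
    · exact ⟨0, fun h => absurd h hy⟩
  choose r hr using hr
  set T := (Z.image γ).filter (fun y => w y ≠ 0) with hT
  have hTsub : ∀ y ∈ T, y ∈ Z.image γ := fun y hy => (Finset.mem_filter.1 hy).1
  set g := T.equivFin.symm with hg
  have hsum : ∀ f : (Fin n → ℝ) → ℝ, (∑ j, w (g j : Fin n → ℝ) * f (g j)) =
      ∑ y ∈ Z.image γ, w y * f y := by
    intro f
    rw [Equiv.sum_comp g (fun y : T => w y * f y), Finset.sum_coe_sort T (fun y => w y * f y),
      hT, Finset.sum_filter_of_ne]
    intro y _ h h'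
    simp [h'] at h
  refine ⟨T.card, (Finset.card_filter_le _ _).trans Finset.card_image_le,
    fun j => w (g j), fun j => r (g j), ?_, ?_, ?_⟩
  · intro j
    have hj := (g j).2
    refine ⟨lt_of_le_of_ne (hw0 _ (hTsub _ hj)) (Ne.symm (Finset.mem_filter.1 hj).2), ?_⟩
    exact hZ _ (hr _ (hTsub _ hj)).1
  · have := hsum (fun _ => 1)
    simpa [hw1] using this
  · intro i
    have h1 := hsum (fun y => y i)
    have h2 := congrFun hws i
    simp only [Finset.sum_apply, Pi.smul_apply, smul_eq_mul] at h2
    rw [← h2, ← h1]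
    refine Finset.sum_congr rfl fun j _ => ?_
    have h3 := congrFun (hr _ (hTsub _ (g j).2)).2 i
    rw [← h3]

theorem CN_prob {n : ℕ} (e : Fin n → ℕ) (he : Function.Injective e) (hpos : ∀ i, 0 < e i)
    (ν : Measure ℝ) [IsProbabilityMeasure ν] (hν : ∀ᵐ x ∂ν, 0 < x)
    (hInteg : ∀ i, Integrable (fun x : ℝ => x ^ e i) ν) :
    ∃ k, 2 * k ≤ n + 2 ∧ ∃ (c : Fin k → ℝ) (x : Fin k → ℝ), (∀ j, 0 < c j ∧ 0 < x j) ∧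
      ∑ j, c j = 1 ∧ ∀ i, (∫ x : ℝ, x ^ e i ∂ν) = ∑ j, c j * x j ^ e i := by
  classical
  have h1 := CN_richter e he hpos ν hν hInteg
  obtain ⟨a, b, ha, hab, h2⟩ : ∃ a b : ℝ, 0 < a ∧ a < b ∧ (fun i => ∫ x : ℝ, x ^ e i ∂ν) ∈
      convexHull ℝ ((fun x : ℝ => fun i => x ^ e i) '' Set.Icc a b) := by
    rw [convexHull_eq_union_convexHull_finite_subsets] at h1
    simp only [Set.mem_iUnion] at h1
    obtain ⟨t, ht, hst⟩ := h1
    obtain ⟨F, hF, rfl⟩ := Finset.subset_set_image_iff.1 ht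
    have hne : F.Nonempty := by
      rw [Finset.nonempty_iff_ne_empty]
      rintro rfl
      simp at hst
    refine ⟨F.min' hne, F.max' hne + 1, hF (F.min'_mem hne), ?_, ?_⟩
    · have := F.min'_le_max' hne
      linarith
    · refine convexHull_mono ?_ hst
      rw [Finset.coe_image]
      refine Set.image_mono fun x hx => ⟨F.min'_le x hx, ?_⟩
      have := F.le_max' x hx
      linarith
  obtain ⟨Z, hZ, hcard, hZs⟩ := CN_step e he hpos a b ha hab _ h2
  obtain ⟨k, hk, c, x, h⟩ := CN_atoms e Z hZ _ hZs
  exact ⟨k, by omega, c, x, h⟩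

theorem CN_upper (n : ℕ) (d : Fin (n + 1) → ℕ) (hd : StrictMono d)
    (μ : Measure ℝ) (hμ : μ (Set.Iic 0) = 0)
    (hInteg : ∀ i, Integrable (fun x : ℝ => x ^ d i) μ) :
      ∃ k ≤ (n + 1 + 1) / 2, ∃ (c : Fin k → ℝ) (x : Fin k → ℝ),
        (∀ j, 0 < c j ∧ 0 < x j) ∧
        ∀ i, (∫ t : ℝ, t ^ d i ∂μ) = ∑ j, c j * x j ^ d i := by
  by_cases h0 : μ = 0
  · refine ⟨0, by omega, Fin.elim0, Fin.elim0, fun j => j.elim0, ?_⟩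
    intro i; simp [h0]
  have hpos : ∀ᵐ x ∂μ, 0 < x := by
    rw [ae_iff]
    convert hμ using 2
    ext x; simp
  set s0 := ∫ x : ℝ, x ^ d 0 ∂μ with hs0
  have hnn : 0 ≤ᵐ[μ] fun x : ℝ => x ^ d 0 := by
    filter_upwards [hpos] with x hx
    exact (pow_pos hx _).le
  have hs0pos : 0 < s0 := by
    refine lt_of_le_of_ne (integral_nonneg_of_ae hnn) (fun h => h0 ?_)
    have := (integral_eq_zero_iff_of_nonneg_ae hnn (hInteg 0)).1 h.symm
    have hF : ∀ᵐ x ∂μ, False := by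
      filter_upwards [hpos, this] with x hx hx0
      exact (pow_pos hx _).ne' hx0
    simpa using hF
  set f : ℝ → ENNReal := fun x => ENNReal.ofReal (x ^ d 0) with hf
  have hfm : Measurable f := by fun_prop
  have hftop : ∀ᵐ x ∂μ, f x < ⊤ := Filter.Eventually.of_forall fun x => ENNReal.ofReal_lt_top
  set ν : Measure ℝ := (ENNReal.ofReal s0)⁻¹ • μ.withDensity f with hν
  have hlin : ∫⁻ x, f x ∂μ = ENNReal.ofReal s0 :=
    (ofReal_integral_eq_lintegral_ofReal (hInteg 0) hnn).symm
  have hs0' : ENNReal.ofReal s0 ≠ 0 := by simpa using hs0pos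
  haveI : IsProbabilityMeasure ν := by
    constructor
    rw [hν, Measure.smul_apply, withDensity_apply _ MeasurableSet.univ, Measure.restrict_univ,
      hlin, smul_eq_mul, ENNReal.inv_mul_cancel hs0' ENNReal.ofReal_ne_top]
  have hνpos : ∀ᵐ x ∂ν, 0 < x := by
    refine Measure.ae_smul_measure ?_ _
    exact (withDensity_absolutelyContinuous μ f).ae_le hpos
  set e : Fin n → ℕ := fun i => d i.succ - d 0 with he
  have hlt : ∀ i : Fin n, d 0 < d i.succ := fun i => hd (Fin.succ_pos i)
  have heinj : Function.Injective e := by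
    intro i j hij
    have h1 := hlt i
    have h2 := hlt j
    have : d i.succ = d j.succ := by simp only [he] at hij; omega
    exact Fin.succ_injective _ (hd.injective this)
  have hae : ∀ i : Fin n, (fun x : ℝ => (f x).toReal • x ^ e i) =ᵐ[μ] fun x => x ^ d i.succ := by
    intro i
    filter_upwards [hpos] with x hx
    rw [hf]
    simp only
    rw [ENNReal.toReal_ofReal (pow_pos hx _).le, smul_eq_mul, ← pow_add]
    congr 1
    have := hlt i
    simp only [he]; omega
  have heint : ∀ i, Integrable (fun x : ℝ => x ^ e i) ν := by
    intro i
    refine Integrable.smul_measure ?_ (ENNReal.inv_ne_top.2 hs0')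
    rw [integrable_withDensity_iff_integrable_smul' hfm hftop]
    exact (hInteg i.succ).congr (hae i).symm
  have heval : ∀ i, ∫ x : ℝ, x ^ e i ∂ν = s0⁻¹ * ∫ x : ℝ, x ^ d i.succ ∂μ := by
    intro i
    rw [hν, integral_smul_measure, integral_withDensity_eq_integral_toReal_smul hfm hftop,
      integral_congr_ae (hae i), ENNReal.toReal_inv, ENNReal.toReal_ofReal hs0pos.le, smul_eq_mul]
  obtain ⟨k, hk, c, x, hcx, hc1, hrep⟩ := CN_prob e heinj
    (fun i => by have := hlt i; simp only [he]; omega) ν hνpos heint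
  refine ⟨k, by omega, fun j => s0 * c j / x j ^ d 0, x, ?_, ?_⟩
  · intro j
    have h1 := (hcx j).1
    have h2 := (hcx j).2
    exact ⟨by positivity, h2⟩
  · intro i
    refine Fin.cases ?_ (fun i => ?_) i
    · calc ∫ t : ℝ, t ^ d 0 ∂μ = s0 * ∑ j, c j := by rw [hc1, mul_one]
        _ = _ := by
          rw [Finset.mul_sum]
          refine Finset.sum_congr rfl fun j _ => ?_
          have h2 := (hcx j).2
          field_simp
    · have h1 : ∫ t : ℝ, t ^ d i.succ ∂μ = s0 * ∑ j, c j * x j ^ e i := by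
        rw [← hrep i, heval i]; field_simp
      rw [h1, Finset.mul_sum]
      refine Finset.sum_congr rfl fun j _ => ?_
      have h2 := (hcx j).2
      have h3 : d i.succ = d 0 + e i := by
        have := hlt i
        simp only [he]; omega
      rw [h3, pow_add]
      field_simp

theorem CN_lower (m : ℕ) (hm : 0 < m) (d : Fin m → ℕ) (hd : StrictMono d) :
    ∃ μ : Measure ℝ, μ (Set.Iic 0) = 0 ∧
      (∀ i, Integrable (fun x : ℝ => x ^ d i) μ) ∧
      ∀ (k : ℕ) (c : Fin k → ℝ) (x : Fin k → ℝ),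
        (∀ j, 0 < c j ∧ 0 < x j) →
        (∀ i, (∫ t : ℝ, t ^ d i ∂μ) = ∑ j, c j * x j ^ d i) →
        (m + 1) / 2 ≤ k := by
  classical
  set N := (m + 1) / 2 with hN
  set P : Finset ℝ := (Finset.range N).image (fun j : ℕ => (j : ℝ) + 1) with hP
  have hPcard : P.card = N := by
    rw [hP, Finset.card_image_of_injective, Finset.card_range]
    intro i j h
    simpa using h
  have hPpos : ∀ z ∈ P, 0 < z := by
    intro z hz
    obtain ⟨j, _, rfl⟩ := Finset.mem_image.1 hz
    positivity
  have hInteg : ∀ i, ∀ z ∈ P, Integrable (fun x : ℝ => x ^ d i) (Measure.dirac z) :=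
    fun i z _ => integrable_dirac (by simp)
  refine ⟨∑ z ∈ P, Measure.dirac z, ?_, ?_, ?_⟩
  · rw [Measure.finsetSum_apply]
    refine Finset.sum_eq_zero fun z hz => ?_
    rw [Measure.dirac_apply' _ measurableSet_Iic]
    simp [hPpos z hz]
  · intro i
    exact integrable_finsetSum_measure.2 (hInteg i)
  · intro k c x hcx hrep
    by_contra hk
    push Not at hk
    have hmom : ∀ i, ∑ z ∈ P, z ^ d i = ∑ j, c j * x j ^ d i := by
      intro i
      rw [← hrep i, integral_finsetSum_measure (hInteg i)]
      simp
    obtain ⟨z, hzP, hzx⟩ : ∃ z ∈ P, z ∉ Finset.univ.image x := by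
      refine Finset.exists_mem_notMem_of_card_lt_card ?_
      have := Finset.card_image_le (s := (Finset.univ : Finset (Fin k))) (f := x)
      simp at this
      omega
    set T : Finset ℝ := P.erase z ∪ Finset.univ.image x with hT
    have hTcard : T.card ≤ m - 1 := by
      have h1 := Finset.card_union_le (P.erase z) (Finset.univ.image x)
      have h2 := Finset.card_image_le (s := (Finset.univ : Finset (Fin k))) (f := x)
      have h3 := Finset.card_erase_of_mem hzP
      rw [← hT] at h1
      simp at h2
      omega
    have hzT : z ∉ T := by simp [hT] at hzx ⊢; exact hzx
    have hTpos : ∀ y ∈ T, 0 < y := by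
      intro y hy
      rcases Finset.mem_union.1 hy with hy | hy
      · exact hPpos y (Finset.mem_of_mem_erase hy)
      · obtain ⟨j, _, rfl⟩ := Finset.mem_image.1 hy
        exact (hcx j).2
    obtain ⟨T', hTT', hT'card, hzT', hT'pos⟩ : ∃ T' : Finset ℝ, T ⊆ T' ∧ T'.card = m - 1 ∧
        z ∉ T' ∧ ∀ y ∈ T', 0 < y := by
      by_cases h0 : m - 1 = 0
      · exact ⟨T, subset_rfl, by omega, hzT, hTpos⟩
      have hinf : (Set.Ioi (0 : ℝ) \ {z}).Infinite :=
        (Set.Ioi_infinite 0).sdiff (Set.finite_singleton z)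
      obtain ⟨T', h1, h2, h3⟩ := hinf.exists_superset_ncard_eq (s := (T : Set ℝ))
        (fun y hy => ⟨hTpos y hy, fun h => hzT (h ▸ hy)⟩) T.finite_toSet
        (k := m - 1) (by simpa using hTcard)
      have hfin : T'.Finite := Set.finite_of_ncard_ne_zero (by rw [h3]; exact h0)
      refine ⟨hfin.toFinset, ?_, ?_, ?_, ?_⟩
      · intro y hy; exact hfin.mem_toFinset.2 (h1 hy)
      · rw [← Set.ncard_eq_toFinset_card _ hfin, h3]
      · intro h; exact (h2 (hfin.mem_toFinset.1 h)).2 rfl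
      · intro y h; exact (h2 (hfin.mem_toFinset.1 h)).1
    let Φ : (Fin m → ℝ) →ₗ[ℝ] (T' → ℝ) :=
      LinearMap.pi fun y : T' => ∑ i, ((y : ℝ) ^ d i) • LinearMap.proj i
    have hker : LinearMap.ker Φ ≠ ⊥ := LinearMap.ker_ne_bot_of_finrank_lt (by
      simp [hT'card]; omega)
    obtain ⟨A, hA, hA0⟩ := Submodule.exists_mem_ne_zero_of_ne_bot hker
    have hAy : ∀ y ∈ T', ∑ i, A i * y ^ d i = 0 := by
      intro y hy
      have := congrFun (LinearMap.mem_ker.1 hA) ⟨y, hy⟩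
      simpa [Φ, mul_comm] using this
    have hAz : ∑ i, A i * z ^ d i = 0 := by
      have h1 : ∑ y ∈ P, ∑ i, A i * y ^ d i = ∑ j, c j * ∑ i, A i * x j ^ d i := by
        rw [Finset.sum_comm]
        simp_rw [← Finset.mul_sum, hmom, Finset.mul_sum]
        rw [Finset.sum_comm]
        refine Finset.sum_congr rfl fun j _ => Finset.sum_congr rfl fun i _ => ?_
        ring
      have h2 : ∑ j, c j * ∑ i, A i * x j ^ d i = 0 := by
        refine Finset.sum_eq_zero fun j _ => ?_
        rw [hAy (x j) (hTT' (Finset.mem_union_right _ (Finset.mem_image_of_mem x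
          (Finset.mem_univ j)))), mul_zero]
      rw [h2, Finset.sum_eq_single_of_mem z hzP] at h1
      · exact h1
      · intro y hy hyz
        exact hAy y (hTT' (Finset.mem_union_left _ (Finset.mem_erase.2 ⟨hyz, hy⟩)))
    set p : Polynomial ℝ := ∑ j, Polynomial.C (A j) * Polynomial.X ^ d j with hp
    have hpe : ∀ y, p.eval y = ∑ i, A i * y ^ d i := by
      intro y; simp [hp, Polynomial.eval_finsetSum]
    have hpne : p ≠ 0 := by
      intro h
      apply hA0
      ext i
      have := CN_coeff d hd.injective A i
      rw [← hp, h] at this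
      simpa using this.symm
    have h1 := CN_desc p hpne
    have h2 := Finset.card_le_card (CN_supp d A)
    have h3 := Finset.card_image_le (s := (Finset.univ : Finset (Fin m))) (f := d)
    have h4 := CN_sum p (insert z T') (by
      intro y hy
      rcases Finset.mem_insert.1 hy with rfl | hy
      · exact hPpos _ hzP
      · exact hT'pos y hy)
    have h5 : ∑ y ∈ insert z T', 1 ≤ ∑ y ∈ insert z T', p.rootMultiplicity y := by
      refine Finset.sum_le_sum fun y hy => (Polynomial.rootMultiplicity_pos hpne).2 ?_
      rw [Polynomial.IsRoot.def, hpe]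
      rcases Finset.mem_insert.1 hy with rfl | hy
      · exact hAz
      · exact hAy y hy
    rw [Finset.sum_const, Finset.card_insert_of_notMem hzT', hT'card] at h5
    simp at h3 h5
    rw [← hp] at h2
    omega

/-- The Carathéodory number of A = {x^{d₁},…,x^{d_m}} on (0,∞) equals ⌈m/2⌉:
every A-moment sequence of a measure on (0,∞) has a representing measure with at most
⌈m/2⌉ atoms in (0,∞), and some moment sequence needs ⌈m/2⌉ atoms. -/
theorem caratheodory_number_gaps_pos (m : ℕ) (hm : 0 < m) (d : Fin m → ℕ)
    (hd : StrictMono d) :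
    (∀ μ : Measure ℝ, μ (Set.Iic 0) = 0 →
      (∀ i, Integrable (fun x : ℝ => x ^ d i) μ) →
      ∃ k ≤ (m + 1) / 2, ∃ (c : Fin k → ℝ) (x : Fin k → ℝ),
        (∀ j, 0 < c j ∧ 0 < x j) ∧
        ∀ i, (∫ t : ℝ, t ^ d i ∂μ) = ∑ j, c j * x j ^ d i) ∧
    (∃ μ : Measure ℝ, μ (Set.Iic 0) = 0 ∧
      (∀ i, Integrable (fun x : ℝ => x ^ d i) μ) ∧
      ∀ (k : ℕ) (c : Fin k → ℝ) (x : Fin k → ℝ),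
        (∀ j, 0 < c j ∧ 0 < x j) →
        (∀ i, (∫ t : ℝ, t ^ d i ∂μ) = ∑ j, c j * x j ^ d i) →
        (m + 1) / 2 ≤ k) := by
  refine ⟨?_, CN_lower m hm d hd⟩
  intro μ hμ hInteg
  obtain ⟨n, rfl⟩ : ∃ n, m = n + 1 := ⟨m - 1, by omega⟩
  exact CN_upper n d hd μ hμ hInteg
end
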